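/- arXiv:2605.21708 — 6 statements merged into one kernel-verified Lean document; each statement's English description precedes it below -/
import Mathlib

section
/- Let P : ℝ → Prop, let t ∈ ℝ, and let 0 ≤ t_{a,1} ≤ t_{b,1} and 0 ≤ t_{a,2} ≤ t_{b,2}. Then (∀ t₁ ∈ [t + t_{a,1}, t + t_{b,1}], ∀ t₂ ∈ [t₁ + t_{a,2}, t₁ + t_{b,2}], P t₂) if and only if (∀ s ∈ [t + t_{a,1} + t_{a,2}, t + t_{b,1} + t_{b,2}], P s). -/
/-- Soundness of Rule 4 for nested Always operators:
`G_{[ta1,tb1]} G_{[ta2,tb2]} ψ ↔ G_{[ta1+ta2, tb1+tb2]} ψ`. -/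
theorem nested_always_iff (P : ℝ → Prop) (t ta1 tb1 ta2 tb2 : ℝ)
    (hta1 : 0 ≤ ta1) (htab1 : ta1 ≤ tb1) (hta2 : 0 ≤ ta2) (htab2 : ta2 ≤ tb2) :
    (∀ t₁ ∈ Set.Icc (t + ta1) (t + tb1), ∀ t₂ ∈ Set.Icc (t₁ + ta2) (t₁ + tb2), P t₂) ↔
      (∀ s ∈ Set.Icc (t + ta1 + ta2) (t + tb1 + tb2), P s) := by
  constructor
  · rintro h s ⟨hs₁, hs₂⟩
    -- The earliest outer instant whose inner window has not ended before `s`.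
    have hl := le_max_left (t + ta1) (s - tb2)
    have hr := le_max_right (t + ta1) (s - tb2)
    have hub : max (t + ta1) (s - tb2) ≤ t + tb1 := max_le (by linarith) (by linarith)
    have hus : max (t + ta1) (s - tb2) ≤ s - ta2 := max_le (by linarith) (by linarith)
    exact h (max (t + ta1) (s - tb2)) ⟨hl, hub⟩ s ⟨by linarith, by linarith⟩
  · rintro h t₁ ⟨h₁, h₂⟩ t₂ ⟨h₃, h₄⟩
    exact h t₂ ⟨by linarith, by linarith⟩
end

section
/- Let P : ℝ → Prop, let t ∈ ℝ, and let 0 ≤ t_{a,1} ≤ t_{b,1} and 0 ≤ t_{a,2} ≤ t_{b,2}. Then (∃ t₁ ∈ [t + t_{a,1}, t + t_{b,1}], ∃ t₂ ∈ [t₁ + t_{a,2}, t₁ + t_{b,2}], P t₂) if and only if (∃ s ∈ [t + t_{a,1} + t_{a,2}, t + t_{b,1} + t_{b,2}], P s). -/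
/-- Soundness of Rule 4 for nested Eventually operators:
`F_{[ta1,tb1]} F_{[ta2,tb2]} ψ ↔ F_{[ta1+ta2, tb1+tb2]} ψ`. -/
theorem nested_eventually_iff (P : ℝ → Prop) (t ta1 tb1 ta2 tb2 : ℝ)
    (hta1 : 0 ≤ ta1) (htab1 : ta1 ≤ tb1) (hta2 : 0 ≤ ta2) (htab2 : ta2 ≤ tb2) :
    (∃ t₁ ∈ Set.Icc (t + ta1) (t + tb1), ∃ t₂ ∈ Set.Icc (t₁ + ta2) (t₁ + tb2), P t₂) ↔
      (∃ s ∈ Set.Icc (t + ta1 + ta2) (t + tb1 + tb2), P s) := by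
  constructor
  · rintro ⟨t₁, ⟨h1, h2⟩, t₂, ⟨h3, h4⟩, hP⟩
    exact ⟨t₂, ⟨by linarith, by linarith⟩, hP⟩
  · rintro ⟨s, ⟨h1, h2⟩, hP⟩
    -- The earliest admissible outer time whose inner window has not closed before `s`.
    refine ⟨max (t + ta1) (s - tb2), ⟨le_max_left _ _, max_le ?_ ?_⟩, s, ⟨?_, ?_⟩, hP⟩
    · linarith
    · linarith
    · rw [← le_sub_iff_add_le]
      exact max_le (by linarith) (by linarith)
    · linarith [le_max_right (t + ta1) (s - tb2)]
end

section
/- Let P : ℝ → Prop, let t ∈ ℝ, let 0 ≤ t_{a,1} ≤ t_{b,1} and 0 ≤ t_{a,2} < t_{b,2}, and let p_f be a natural number with p_f ≥ 1 and p_f ≥ ⌈(t_{b,1} − t_{a,1}) / (t_{b,2} − t_{a,2})⌉. Let δ₁, …, δ_{p_f} be real numbers with (t_{b,1} − t_{a,1}) / (p_f · (t_{b,2} − t_{a,2})) ≤ δ_i ≤ 1 for each i, and define w₀ = t_{a,1} + t_{a,2} and w_i = w_{i−1} + δ_i · (t_{b,2} − t_{a,2}) for i = 1, …, p_f. If P(t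 + w_i) holds for every i ∈ {1, …, p_f}, then for every t₁ ∈ [t + t_{a,1}, t + t_{b,1}] there exists t₂ ∈ [t₁ + t_{a,2}, t₁ + t_{b,2}] such that P(t₂). -/
/-! Shifting time by `t` and `ta2`, the claim is that every `s ∈ [w 0, tb1 + ta2]` has a sample
`w i`, `1 ≤ i ≤ pf`, in `[s, s + (tb2 - ta2)]`. The lower bound on `δ` makes each of the `pf` steps
at least `(tb1 - ta1) / pf`, so the last sample satisfies `w pf ≥ tb1 + ta2 ≥ s`. For the first
`i ≥ 1` with `s ≤ w i`, the preceding instant satisfies `w (i - 1) ≤ s` (by minimality, or because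
`w 0 ≤ s`), and the step is at most `tb2 - ta2` since `δ i ≤ 1`. -/

/-- Proposition 6 (soundness of Rule 5): satisfying the conjunction
`⋀_{i=1}^{p_f} F_{[w_i,w_i]} ψ`, where the sampling instants `w_i` are built
from admissible step sizes `δ_i`, implies satisfying
`G_{[ta1,tb1]} F_{[ta2,tb2]} ψ`. -/
theorem always_eventually_of_sampled (P : ℝ → Prop) (t ta1 tb1 ta2 tb2 : ℝ)
    (hta1 : 0 ≤ ta1) (htab1 : ta1 ≤ tb1) (hta2 : 0 ≤ ta2) (htab2 : ta2 < tb2)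
    (pf : ℕ) (hpf1 : 1 ≤ pf)
    (hpf : ⌈(tb1 - ta1) / (tb2 - ta2)⌉ ≤ (pf : ℤ))
    (δ : ℕ → ℝ)
    (hδ : ∀ i, 1 ≤ i → i ≤ pf →
      (tb1 - ta1) / (pf * (tb2 - ta2)) ≤ δ i ∧ δ i ≤ 1)
    (w : ℕ → ℝ) (hw0 : w 0 = ta1 + ta2)
    (hw : ∀ i, 1 ≤ i → i ≤ pf → w i = w (i - 1) + δ i * (tb2 - ta2))
    (hP : ∀ i, 1 ≤ i → i ≤ pf → P (t + w i)) :
    ∀ t₁ ∈ Set.Icc (t + ta1) (t + tb1),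
      ∃ t₂ ∈ Set.Icc (t₁ + ta2) (t₁ + tb2), P t₂ := by
  rintro t₁ ⟨h1, h2⟩
  have hL : 0 < tb2 - ta2 := sub_pos.mpr htab2
  have hpf0 : (0 : ℝ) < pf := by exact_mod_cast hpf1
  have hlow : ∀ k : ℕ, k ≤ pf → w 0 + k * ((tb1 - ta1) / pf) ≤ w k := by
    intro k
    induction k with
    | zero => intro _; simp
    | succ k ih =>
      intro hk
      have hstep := hw (k + 1) (by omega) hk
      have hδk := mul_le_mul_of_nonneg_right (hδ (k + 1) (by omega) hk).1 hL.le
      have heq : (tb1 - ta1) / (pf * (tb2 - ta2)) * (tb2 - ta2) = (tb1 - ta1) / pf := by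
        field_simp
      rw [heq] at hδk
      have ihk := ih (by omega)
      rw [Nat.add_sub_cancel] at hstep
      push_cast
      linarith
  have hlast : t₁ - t + ta2 ≤ w pf := by
    have h := hlow pf le_rfl
    rw [mul_div_cancel₀ _ hpf0.ne'] at h
    linarith
  classical
  have hex : ∃ i, 1 ≤ i ∧ t₁ - t + ta2 ≤ w i := ⟨pf, hpf1, hlast⟩
  obtain ⟨hi1, hsi⟩ := Nat.find_spec hex
  have hipf : Nat.find hex ≤ pf := Nat.find_min' hex ⟨hpf1, hlast⟩
  have hmin : ∀ j, j < Nat.find hex → ¬(1 ≤ j ∧ t₁ - t + ta2 ≤ w j) :=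
    fun j hj => Nat.find_min hex hj
  generalize Nat.find hex = i at hi1 hsi hipf hmin
  have hprev : w (i - 1) ≤ t₁ - t + ta2 := by
    rcases Nat.eq_zero_or_pos (i - 1) with h0 | hpos
    · rw [h0, hw0]
      linarith
    · by_contra! hlt
      exact hmin (i - 1) (by omega) ⟨hpos, hlt.le⟩
  have hstep := hw i hi1 hipf
  have hδi := mul_le_mul_of_nonneg_right (hδ i hi1 hipf).2 hL.le
  exact ⟨t + w i, ⟨by linarith, by linarith⟩, hP i hi1 hipf⟩
end

section
/- Let n be a natural number, λ > 1/2 and D ≥ 0 real numbers, d : ℝ → EuclideanSpace ℝ (Fin n) a function with ‖d(t)‖ ≤ D for all t ≥ 0, and let e : ℝ → EuclideanSpace ℝ (Fin n) be differentiable with derivative e'(t) = −λ • e(t) + d(t) for all t ≥ 0 (HasDerivAt). Then for every t ≥ 0, ‖e(t)‖² ≤ (‖e(0)‖² − D²/(2λ − 1)) · Real.exp(−(2λ − 1) t) + D²/(2λ − 1). -/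
/-!
Write `c = 2λ - 1 > 0` and `K = D² / c`. Young's inequality `2⟪e, d⟫ ≤ ‖e‖² + D²` gives
`(‖e‖²)' ≤ -c (‖e‖² - K)`, so the function `(‖e t‖² - K) exp (c t)` has nonpositive derivative
on `[0, ∞)`. Comparing its values at `0` and `t` is the claimed bound.
-/

/-- Quantitative version of Proposition 7(i): the estimation error of the
reference model, with dynamics `ė = -λ e + d` and `‖d‖ ≤ D`, satisfies the
exponential squared-norm bound. -/
theorem estimation_error_sq_bound (n : ℕ) (lam D : ℝ) (hlam : 1 / 2 < lam) (hD : 0 ≤ D)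
    (d : ℝ → EuclideanSpace ℝ (Fin n)) (hd : ∀ t, 0 ≤ t → ‖d t‖ ≤ D)
    (e : ℝ → EuclideanSpace ℝ (Fin n))
    (he : ∀ t, 0 ≤ t → HasDerivAt e (-lam • e t + d t) t) :
    ∀ t, 0 ≤ t →
      ‖e t‖ ^ 2 ≤ (‖e 0‖ ^ 2 - D ^ 2 / (2 * lam - 1)) * Real.exp (-(2 * lam - 1) * t)
        + D ^ 2 / (2 * lam - 1) := by
  intro t ht
  obtain ⟨c, hc⟩ : ∃ c, c = 2 * lam - 1 := ⟨_, rfl⟩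
  have hc0 : 0 < c := by linarith
  rw [← hc]
  obtain ⟨K, hK⟩ : ∃ K, K = D ^ 2 / c := ⟨_, rfl⟩
  have hcK : c * K = D ^ 2 := by rw [hK]; field_simp
  rw [← hK]
  have hderiv : ∀ s, 0 ≤ s → HasDerivAt (fun s => (‖e s‖ ^ 2 - K) * Real.exp (c * s))
      (2 * inner ℝ (e s) (-lam • e s + d s) * Real.exp (c * s)
        + (‖e s‖ ^ 2 - K) * (Real.exp (c * s) * c)) s := by
    intro s hs
    have hexp : HasDerivAt (fun s => Real.exp (c * s)) (Real.exp (c * s) * c) s := by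
      simpa using ((hasDerivAt_id s).const_mul c).exp
    exact ((he s hs).norm_sq.sub_const K).mul hexp
  have hanti : AntitoneOn (fun s => (‖e s‖ ^ 2 - K) * Real.exp (c * s)) (Set.Ici 0) := by
    refine antitoneOn_of_hasDerivWithinAt_nonpos (convex_Ici 0)
      (fun s hs => (hderiv s hs).continuousAt.continuousWithinAt)
      (fun s hs => (hderiv s (interior_subset hs)).hasDerivWithinAt) ?_
    intro s hs
    have hs0 : 0 ≤ s := interior_subset hs
    have hin : inner ℝ (e s) (d s) ≤ ‖e s‖ * D :=
      (real_inner_le_norm _ _).trans (mul_le_mul_of_nonneg_left (hd s hs0) (norm_nonneg _))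
    rw [inner_add_right, inner_smul_right, real_inner_self_eq_norm_sq]
    have hfactor : 2 * (-lam * ‖e s‖ ^ 2 + inner ℝ (e s) (d s)) + (‖e s‖ ^ 2 - K) * c ≤ 0 := by
      have hlam' : lam = (c + 1) / 2 := by linarith
      rw [hlam']
      nlinarith [sq_nonneg (‖e s‖ - D)]
    have := mul_nonpos_of_nonpos_of_nonneg hfactor (Real.exp_pos (c * s)).le
    linarith
  have h := hanti (Set.mem_Ici.2 le_rfl) (Set.mem_Ici.2 ht) ht
  simp only [mul_zero, Real.exp_zero, mul_one] at h
  have h' := mul_le_mul_of_nonneg_right h (Real.exp_pos (-c * t)).le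
  rw [mul_assoc, ← Real.exp_add, show c * t + -c * t = 0 by ring, Real.exp_zero, mul_one] at h'
  linarith
end

section
/- Let n be a natural number, λ > 1/2 and D ≥ 0 real numbers, d : ℝ → EuclideanSpace ℝ (Fin n) a function with ‖d(t)‖ ≤ D for all t ≥ 0, and let e : ℝ → EuclideanSpace ℝ (Fin n) be differentiable with derivative e'(t) = −λ • e(t) + d(t) for all t ≥ 0 (HasDerivAt). Then e is bounded on [0, ∞), and limsup_{t → ∞} ‖e(t)‖ ≤ D / Real.sqrt(2λ − 1). -/
/-!
The function `V t = ‖e t‖ ^ 2` satisfies, with `c = 2 * lam - 1 > 0`,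
`V' = 2 ⟪e, -lam • e + d⟫ ≤ -2 * lam * ‖e‖ ^ 2 + 2 * D * ‖e‖ ≤ -c * V + D ^ 2`,
the last step by Young's inequality. Grönwall's inequality with the negative rate `-c` then gives
`V t ≤ V 0 * exp (-c * t) + D ^ 2 / c` (`norm_sq_le_exp_decay`), from which both the
boundedness and, as `t → ∞`, the bound on the limit superior follow by taking square roots.
-/

open Filter

/-- Grönwall estimate for the Lyapunov function `‖e t‖ ^ 2`, valid in any real inner product
space. -/
theorem norm_sq_le_exp_decay {E : Type*} [NormedAddCommGroup E] [InnerProductSpace ℝ E]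
    {lam D : ℝ} (hlam : 1 / 2 < lam) {d e : ℝ → E} (hd : ∀ t, 0 ≤ t → ‖d t‖ ≤ D)
    (he : ∀ t, 0 ≤ t → HasDerivAt e (-lam • e t + d t) t) {t : ℝ} (ht : 0 ≤ t) :
    ‖e t‖ ^ 2 ≤
      ‖e 0‖ ^ 2 * Real.exp (-(2 * lam - 1) * t) + D ^ 2 / (2 * lam - 1) := by
  have hc : 0 < 2 * lam - 1 := by linarith
  have hV : ∀ s, 0 ≤ s → HasDerivAt (fun s => ‖e s‖ ^ 2)
      (2 * inner ℝ (e s) (-lam • e s + d s)) s := fun s hs => (he s hs).norm_sq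
  have key := le_gronwallBound_of_liminf_deriv_right_le (f := fun s => ‖e s‖ ^ 2)
    (f' := fun s => 2 * inner ℝ (e s) (-lam • e s + d s))
    (δ := ‖e 0‖ ^ 2) (K := -(2 * lam - 1)) (ε := D ^ 2) (a := 0) (b := t)
    (fun s hs => (hV s hs.1).continuousAt.continuousWithinAt)
    (fun s hs r hr => (hV s hs.1).hasDerivWithinAt.liminf_right_slope_le hr)
    le_rfl
    (fun s hs => by
      have h1 : inner ℝ (e s) (d s) ≤ ‖e s‖ * ‖d s‖ := real_inner_le_norm _ _
      have h2 : ‖e s‖ * ‖d s‖ ≤ ‖e s‖ * D :=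
        mul_le_mul_of_nonneg_left (hd s hs.1) (norm_nonneg _)
      simp only [inner_add_right, inner_smul_right, real_inner_self_eq_norm_sq]
      nlinarith [sq_nonneg (‖e s‖ - D)])
    t ⟨ht, le_rfl⟩
  rw [gronwallBound_of_K_ne_0 (neg_ne_zero.mpr hc.ne')] at key
  simp only [sub_zero, div_neg] at key
  have h3 : 0 ≤ D ^ 2 / (2 * lam - 1) * Real.exp (-(2 * lam - 1) * t) := by positivity
  linarith

/-- Proposition 7(i): the estimation error with dynamics `ė = -λ e + d`,
`‖d‖ ≤ D`, remains bounded on `[0, ∞)` and satisfies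
`limsup_{t → ∞} ‖e(t)‖ ≤ D / √(2λ - 1)`. -/
theorem estimation_error_bounded_and_limsup (n : ℕ) (lam D : ℝ)
    (hlam : 1 / 2 < lam) (hD : 0 ≤ D)
    (d : ℝ → EuclideanSpace ℝ (Fin n)) (hd : ∀ t, 0 ≤ t → ‖d t‖ ≤ D)
    (e : ℝ → EuclideanSpace ℝ (Fin n))
    (he : ∀ t, 0 ≤ t → HasDerivAt e (-lam • e t + d t) t) :
    (∃ M : ℝ, ∀ t, 0 ≤ t → ‖e t‖ ≤ M) ∧
      Filter.limsup (fun t => ‖e t‖) atTop ≤ D / Real.sqrt (2 * lam - 1) := by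
  have hc : 0 < 2 * lam - 1 := by linarith
  have hV := fun t ht => norm_sq_le_exp_decay (t := t) hlam hd he ht
  have hle : ∀ t, 0 ≤ t → ‖e t‖ ≤
      √(‖e 0‖ ^ 2 * Real.exp (-(2 * lam - 1) * t) + D ^ 2 / (2 * lam - 1)) :=
    fun t ht => Real.le_sqrt_of_sq_le (hV t ht)
  refine ⟨⟨√(‖e 0‖ ^ 2 + D ^ 2 / (2 * lam - 1)), fun t ht => (hle t ht).trans ?_⟩, ?_⟩
  · have h1 : Real.exp (-(2 * lam - 1) * t) ≤ 1 := Real.exp_le_one_iff.mpr (by nlinarith)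
    gcongr
    exact mul_le_of_le_one_right (by positivity) h1
  · have hexp : Tendsto (fun t : ℝ => Real.exp (-(2 * lam - 1) * t)) atTop (nhds 0) :=
      Real.tendsto_exp_atBot.comp (tendsto_id.const_mul_atTop_of_neg (by linarith))
    have hlim : Tendsto (fun t : ℝ =>
        √(‖e 0‖ ^ 2 * Real.exp (-(2 * lam - 1) * t) + D ^ 2 / (2 * lam - 1)))
        atTop (nhds (D / √(2 * lam - 1))) := by
      have h := ((hexp.const_mul (‖e 0‖ ^ 2)).add_const (D ^ 2 / (2 * lam - 1))).sqrt
      rwa [mul_zero, zero_add, Real.sqrt_div (sq_nonneg D), Real.sqrt_sq hD] at h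
    rw [← hlim.limsup_eq]
    -- In `ℝ`, monotonicity of `limsup` needs the left side cobounded and the right side bounded above.
    refine limsup_le_limsup ?_ ?_ hlim.isBoundedUnder_le
    · filter_upwards [eventually_ge_atTop 0] with t ht using hle t ht
    · exact isCoboundedUnder_le_of_le atTop (x := 0) fun t => norm_nonneg _
end

section
/- Let α : ℝ → ℝ be locally Lipschitz with α(0) = 0, and let h : ℝ → ℝ be a function such that h(0) ≥ 0 and, for every t ≥ 0, h has derivative h'(t) at t (HasDerivAt) with h'(t) ≥ −α(h(t)). Then h(t) ≥ 0 for all t ≥ 0. -/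
/-!
The function `B x = c * exp ((K + 1) * (x - t))`, with `K` a Lipschitz constant of `α` near `0` and
`c > 0` small, is a strict upper barrier for `-h` on `[0, t]`: at a point where `-h = B`,
`(-h)' ≤ α (h) = α (-B) ≤ K * B < B'`. Hence `-h t ≤ B t = c`, and `c` is arbitrarily small.
Since `B ≤ c` on `[0, t]`, only the Lipschitz bound of `α` in a neighbourhood of `0` is needed.
-/

/-- Scalar comparison principle underlying Lemma 1 (zeroing CBFs): if
`α` is locally Lipschitz with `α(0) = 0`, `h(0) ≥ 0`, and
`ḣ(t) ≥ -α(h(t))` for all `t ≥ 0`, then `h(t) ≥ 0` for all `t ≥ 0`. -/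
theorem zcbf_forward_invariance (α : ℝ → ℝ) (hα : LocallyLipschitz α) (hα0 : α 0 = 0)
    (h h' : ℝ → ℝ) (hh0 : 0 ≤ h 0)
    (hder : ∀ t, 0 ≤ t → HasDerivAt h (h' t) t)
    (hineq : ∀ t, 0 ≤ t → -α (h t) ≤ h' t) :
    ∀ t, 0 ≤ t → 0 ≤ h t := by
  intro t ht
  by_contra! hneg
  obtain ⟨K, s, hs, hLip⟩ := hα 0
  obtain ⟨δ, hδ, hball⟩ := Metric.mem_nhds_iff.1 hs
  obtain ⟨c, hc, hcmin⟩ := exists_between (lt_min hδ (neg_pos.2 hneg))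
  obtain ⟨hcδ, hct⟩ := lt_min_iff.1 hcmin
  have hα_le : ∀ y, 0 ≤ y → y < δ → α (-y) ≤ K * y := by
    intro y hy hyδ
    have hy_mem : -y ∈ s := hball (by simpa [abs_of_nonneg hy] using hyδ)
    have hdist := hLip.dist_le_mul (-y) hy_mem 0 (hball (Metric.mem_ball_self hδ))
    simp only [Real.dist_eq, hα0, sub_zero, abs_neg, abs_of_nonneg hy] at hdist
    exact (le_abs_self _).trans hdist
  let B : ℝ → ℝ := fun x => c * Real.exp ((K + 1) * (x - t))
  have hBpos : ∀ x, 0 < B x := fun x => by positivity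
  have hBderiv : ∀ x, HasDerivAt B ((K + 1) * B x) x := by
    intro x
    have := ((((hasDerivAt_id x).sub_const t).const_mul ((K : ℝ) + 1)).exp).const_mul c
    refine this.congr_deriv ?_
    simp only [B, id]
    ring
  have hBle : ∀ x, x ≤ t → B x ≤ c := by
    intro x hx
    have : Real.exp ((K + 1) * (x - t)) ≤ 1 :=
      Real.exp_le_one_iff.2 (mul_nonpos_of_nonneg_of_nonpos (by positivity) (by linarith))
    exact mul_le_of_le_one_right hc.le this
  have hbarrier : -h t ≤ B t := by
    refine image_le_of_deriv_right_lt_deriv_boundary (f := fun x => -h x) (f' := fun x => -h' x)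
      (a := 0) (b := t) (fun x hx => (hder x hx.1).neg.continuousAt.continuousWithinAt)
      (fun x hx => (hder x hx.1).neg.hasDerivWithinAt) ?_ hBderiv ?_ ⟨ht, le_rfl⟩
    · linarith [hBpos 0]
    · intro x hx hxB
      have hhx : h x = -B x := by linarith
      have h1 := hineq x hx.1
      rw [hhx] at h1
      linarith [hα_le (B x) (hBpos x).le ((hBle x hx.2.le).trans_lt hcδ), hBpos x]
  linarith [hBle t le_rfl]
end
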